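/- arXiv:math/0612415 — 2 statements merged into one kernel-verified Lean document; each statement's English description precedes it below -/
import Mathlib

section
/- Let k ∈ ℤ with k ≠ 0, and let f = x² + kx − 1 ∈ ℤ[x]. If k ≠ −1, then f is stable, i.e. f^n is irreducible over ℚ for all n ≥ 1. If k = −1, then f³ = g₁·g₂ where g₁ = x⁴ − 3x³ + 4x − 1 and g₂ = x⁴ − x³ − 3x² + x + 1, and both g₁ and g₂ are f-stable: g₁ ∘ f^n and g₂ ∘ f^n are irreducible over ℚ for every n ≥ 0. -/
open Polynomial

/-- The `n`-th iterate of a polynomial, with `f^0 = X`. -/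
noncomputable def polyIter (f : Polynomial ℤ) : ℕ → Polynomial ℤ
  | 0 => X
  | n + 1 => f.comp (polyIter f n)

/-!
Write `f = X ^ 2 + k X - 1 = (X + k / 2) ^ 2 + m` with critical value `m = -(k ^ 2 + 4) / 4`.
If `g` is monic irreducible and `g ∘ f` is reducible, then for a root `θ` of `g` the element `θ - m`
is a square in `ℚ(θ)`, and its norm `± g(m)` is a square in `ℚ`. So, for `g` of even degree, all
`g ∘ f ^ n` are irreducible as soon as `g` takes no square value on the orbit `c n = f ^ n (m)`.

For `g = f` the values are the `c (n + 1)`, and up to a square factor `c (n + 1)` is the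
discriminant of a monic integer quadratic. If it were a square, the quadratic would have integer
roots, so its linear coefficient could hardly exceed its constant one; for `k ≤ -4` and `6 ≤ k` the
orbit grows too fast for that. For the other `k` the orbit is finite modulo any odd `N`, and for a
suitable `N` it avoids the squares of `ℤ / N`. Two parameters need another starting point `g`: for
`k = 4`, where `c 1 = 4`, it is `f ∘ f = (X ^ 2 + 4 X + 1) ^ 2 - 5`, irreducible by a generalized
Eisenstein criterion at `5`; for `k = -1` it is either of the two quartic factors of `f ^ 3`, which
are irreducible modulo `2`.
-/

section Capelli

variable {K : Type*} [Field K] {g : K[X]}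

theorem irreducible_comp_X_sq (hg : g.Monic) (hirr : Irreducible g)
    (hsq : ¬IsSquare ((-1) ^ g.natDegree * g.eval 0)) : Irreducible (g.comp (X ^ 2)) := by
  refine irreducible_comp hg (monic_X_pow 2) hirr fun E _ _ x hx ↦ ?_
  have hint : IsIntegral K x := minpoly.ne_zero_iff.1 (hx ▸ hirr.ne_zero)
  rw [Polynomial.map_pow, map_X]
  refine X_pow_sub_C_irreducible_of_prime Nat.prime_two fun b hb ↦ hsq ?_
  have hnorm := Algebra.PowerBasis.norm_gen_eq_coeff_zero_minpoly
    (IntermediateField.adjoin.powerBasis hint)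
  rw [IntermediateField.adjoin.powerBasis_gen, IntermediateField.minpoly_gen,
    IntermediateField.adjoin.powerBasis_dim, hx, coeff_zero_eq_eval_zero, ← hb, map_pow] at hnorm
  exact ⟨_, hnorm.symm.trans (sq _)⟩

theorem irreducible_comp_X_add_C_iff {R : Type*} [CommRing R] {p : R[X]} (r : R) :
    Irreducible (p.comp (X + C r)) ↔ Irreducible p :=
  MulEquiv.irreducible_iff (taylorEquiv r)

theorem irreducible_comp_X_sub_C_sq_add_C (γ m : K) (hg : g.Monic) (hirr : Irreducible g)
    (hsq : ¬IsSquare ((-1) ^ g.natDegree * g.eval m)) :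
    Irreducible (g.comp ((X - C γ) ^ 2 + C m)) := by
  have hcomp : g.comp ((X - C γ) ^ 2 + C m)
      = ((g.comp (X + C m)).comp (X ^ 2)).comp (X + C (-γ)) := by
    simp [comp_assoc, sub_eq_add_neg]
  rw [hcomp, irreducible_comp_X_add_C_iff]
  refine irreducible_comp_X_sq (hg.comp_X_add_C m) ((irreducible_comp_X_add_C_iff m).2 hirr) ?_
  simpa [natDegree_comp] using hsq

theorem irreducible_comp_iterate_comp_X (γ m : K) (hg : g.Monic) (hirr : Irreducible g)
    (heven : Even g.natDegree)
    (hsq : ∀ n, ¬IsSquare (g.eval ((fun x ↦ (x - γ) ^ 2 + m)^[n] m))) (n : ℕ) :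
    Irreducible (g.comp (((X - C γ) ^ 2 + C m).comp^[n] X)) := by
  have hmonic : ((X - C γ) ^ 2 + C m).Monic := by monicity!
  have hdeg : ((X - C γ) ^ 2 + C m).natDegree = 2 := by compute_degree!
  induction n generalizing g with
  | zero => simpa using hirr
  | succ n ih =>
    have hgdeg : Even (g.comp ((X - C γ) ^ 2 + C m)).natDegree := by simp [natDegree_comp, hdeg]
    rw [Function.iterate_succ_apply', ← comp_assoc]
    refine ih (hg.comp hmonic (by simp [hdeg])) ?_ hgdeg fun n ↦ ?_
    · refine irreducible_comp_X_sub_C_sq_add_C γ m hg hirr ?_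
      simpa [heven.neg_one_pow] using hsq 0
    · simpa [Function.iterate_succ_apply'] using hsq (n + 1)

end Capelli

section Irreducibility

theorem irreducible_pow_sub_C {R K : Type*} [CommRing R] [IsDomain R] [Field K] [Algebra R K]
    {q : R[X]} {a : R} {e : ℕ} (hirr : Irreducible (q.map (algebraMap R K))) (hq : q.Monic)
    (ha : algebraMap R K a = 0) (ha' : a ∉ RingHom.ker (algebraMap R K) ^ 2) (he : e ≠ 0) :
    Irreducible (q ^ e - C a) := by
  have hpos : 0 < q.natDegree := hq.natDegree_map (algebraMap R K) ▸ hirr.natDegree_pos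
  have hdeg : (C a).degree < (q ^ e).degree := by
    refine degree_C_le.trans_lt (natDegree_pos_iff_degree_pos.1 ?_)
    rw [hq.natDegree_pow]; positivity
  have hmonic : (q ^ e - C a).Monic := (hq.pow e).sub_of_left hdeg
  have hmod : (q ^ e - C a) %ₘ q = C (-a) := by
    rw [modByMonic_eq_of_dvd_sub hq (p₂ := C (-a)) (by simpa using dvd_pow_self q he),
      (modByMonic_eq_self_iff hq).2]
    exact degree_C_le.trans_lt (natDegree_pos_iff_degree_pos.1 hpos)
  refine generalizedEisenstein (p := e) hirr hq hmonic.isPrimitive ?_ ?_ ?_ ?_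
  · rw [natDegree_sub_C, hq.natDegree_pow]; positivity
  · simp [hmonic.leadingCoeff]
  · simp [hmonic.leadingCoeff, ha]
  · rwa [hmod, map_C, ne_eq, C_eq_zero, Ideal.Quotient.eq_zero_iff_mem, neg_mem_iff]

theorem eq_X_sq_add_of_monic_of_natDegree_eq_two {R : Type*} [Semiring R] {p : R[X]}
    (hp : p.Monic) (hdeg : p.natDegree = 2) :
    p = X ^ 2 + C (p.coeff 1) * X + C (p.coeff 0) := by
  conv_lhs => rw [hp.as_sum, hdeg]
  simp only [Finset.sum_range_succ, Finset.sum_range_zero, zero_add, pow_zero, pow_one, mul_one]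
  rw [add_assoc, add_comm (C (p.coeff 1) * X)]

theorem coeff_eq_of_quartic_eq {R : Type*} [Semiring R] {a b c d a' b' c' d' : R}
    (h : X ^ 4 + C a * X ^ 3 + C b * X ^ 2 + C c * X + C d
      = X ^ 4 + C a' * X ^ 3 + C b' * X ^ 2 + C c' * X + C d') :
    a = a' ∧ b = b' ∧ c = c' ∧ d = d' := by
  refine ⟨?_, ?_, ?_, ?_⟩
  · simpa [coeff_X, coeff_C] using congrArg (coeff · 3) h
  · simpa [coeff_X, coeff_C] using congrArg (coeff · 2) h
  · simpa [coeff_X, coeff_C] using congrArg (coeff · 1) h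
  · simpa [coeff_X, coeff_C] using congrArg (coeff · 0) h

theorem irreducible_quartic {R : Type*} [CommRing R] [IsDomain R] {a b c d : R}
    (hroot : ∀ r, r ^ 4 + a * r ^ 3 + b * r ^ 2 + c * r + d ≠ 0)
    (hquad : ∀ p q r s, p + r = a → q + s + p * r = b → p * s + q * r = c → q * s ≠ d) :
    Irreducible (X ^ 4 + C a * X ^ 3 + C b * X ^ 2 + C c * X + C d) := by
  set P : R[X] := X ^ 4 + C a * X ^ 3 + C b * X ^ 2 + C c * X + C d with hP
  have hdeg : P.natDegree = 4 := by unfold P; compute_degree!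
  have hmonic : P.Monic := by unfold P; monicity!
  rw [hmonic.irreducible_iff_natDegree']
  refine ⟨fun h ↦ by simp [h] at hdeg, fun u v hu hv huv hmem ↦ ?_⟩
  have hsum : u.natDegree + v.natDegree = 4 := by rw [← hu.natDegree_mul hv, huv, hdeg]
  rw [hdeg, Finset.mem_Ioc] at hmem
  obtain hv1 | ⟨hv2, hu2⟩ : v.natDegree = 1 ∨ v.natDegree = 2 ∧ u.natDegree = 2 := by lia
  · refine hroot (-v.coeff 0) ?_
    have hPeval : P.eval (-v.coeff 0) = 0 := by
      rw [← huv, hv.eq_X_add_C hv1]; simp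
    simpa [P] using hPeval
  · obtain ⟨p, q, rfl⟩ : ∃ p q, u = X ^ 2 + C p * X + C q :=
      ⟨_, _, eq_X_sq_add_of_monic_of_natDegree_eq_two hu hu2⟩
    obtain ⟨r, s, rfl⟩ : ∃ r s, v = X ^ 2 + C r * X + C s :=
      ⟨_, _, eq_X_sq_add_of_monic_of_natDegree_eq_two hv hv2⟩
    have hcoeff : X ^ 4 + C (p + r) * X ^ 3 + C (q + s + p * r) * X ^ 2 + C (p * s + q * r) * X
        + C (q * s) = X ^ 4 + C a * X ^ 3 + C b * X ^ 2 + C c * X + C d := by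
      rw [← hP, ← huv]
      simp only [C_add, C_mul]
      ring
    obtain ⟨h3, h2, h1, h0⟩ := coeff_eq_of_quartic_eq hcoeff
    exact hquad p q r s h3 h2 h1 h0

theorem irreducible_map_rat_of_irreducible_map {R : Type*} [CommRing R] [IsDomain R] {g : ℤ[X]}
    (hg : g.Monic) (φ : ℤ →+* R) (h : Irreducible (g.map φ)) :
    Irreducible (g.map (Int.castRingHom ℚ)) :=
  (hg.irreducible_iff_irreducible_map_fraction_map (K := ℚ)).1
    (hg.irreducible_of_irreducible_map φ _ h)

end Irreducibility

section Discriminant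

theorem exists_add_eq_mul_eq_of_isSquare {b e : ℤ} (h : IsSquare (b ^ 2 - 4 * e)) :
    ∃ u v : ℤ, u + v = b ∧ u * v = e := by
  obtain ⟨s, hs⟩ := h
  have hparity : Even (b + s) := by
    have : Even (b ^ 2 + s ^ 2) := ⟨s ^ 2 + 2 * e, by linear_combination hs⟩
    simpa [Int.even_add, Int.even_pow] using this
  obtain ⟨u, hu⟩ := hparity
  have hprod : 4 * (u * (b - u)) = 4 * e := by linear_combination hs + (s - b + 2 * u) * hu
  exact ⟨u, b - u, by ring, mul_left_cancel₀ four_ne_zero hprod⟩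

-- The roots `u, v` of `X ^ 2 - b X + e` are then integers, and `(|u| - 1) * (|v| - 1) ≥ 0`.
theorem abs_le_abs_add_one_of_isSquare {b e : ℤ} (he : e ≠ 0) (h : IsSquare (b ^ 2 - 4 * e)) :
    |b| ≤ |e| + 1 := by
  obtain ⟨u, v, rfl, rfl⟩ := exists_add_eq_mul_eq_of_isSquare h
  have hu : 1 ≤ |u| := Int.one_le_abs (left_ne_zero_of_mul he)
  have hv : 1 ≤ |v| := Int.one_le_abs (right_ne_zero_of_mul he)
  rw [abs_mul]
  nlinarith [abs_add_le u v]

theorem not_isSquare_sq_add_four {k : ℤ} (hk : k ≠ 0) : ¬IsSquare (k ^ 2 + 4) := by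
  intro h
  obtain ⟨u, v, hsum, hprod⟩ :=
    exists_add_eq_mul_eq_of_isSquare (b := k) (e := -1) (by simpa using h)
  rcases Int.mul_eq_neg_one_iff_eq_one_or_neg_one.1 hprod with ⟨rfl, rfl⟩ | ⟨rfl, rfl⟩ <;> lia

end Discriminant

section ClearDenominators

theorem intCast_eval_scaleRoots {R : Type*} [CommRing R] {a b : ℤ} {y : R} (hy : b * y = a)
    (p : ℤ[X]) : (((p.scaleRoots b).eval a : ℤ) : R) = b ^ p.natDegree * aeval y p := by
  simpa [hy, aeval_def] using scaleRoots_eval₂_mul (p := p) (Int.castRingHom R) y b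

theorem isSquare_aeval_of_isSquare_aeval_div {S : Type*} [CommRing S] {a b : ℤ} {u : S}
    (hb : b ≠ 0) (hu : b * u = 1) {p : ℤ[X]} (h : IsSquare (aeval (a / b : ℚ) p)) :
    IsSquare (aeval (a * u) p) := by
  set d := p.natDegree
  set N : ℤ := b ^ d * (p.scaleRoots b).eval a with hNdef
  have hN : IsSquare N := by
    have hNq : (N : ℚ) = (b ^ d) ^ 2 * aeval (a / b : ℚ) p := by
      rw [hNdef, Int.cast_mul,
        intCast_eval_scaleRoots (mul_div_cancel₀ (a : ℚ) (Int.cast_ne_zero.2 hb))]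
      push_cast
      ring
    rw [← Rat.isSquare_intCast_iff, hNq]
    exact (IsSquare.sq _).mul h
  have hval : aeval (a * u) p = (u ^ d) ^ 2 * N := by
    have hud : (b : S) ^ d * u ^ d = 1 := by rw [← mul_pow, hu, one_pow]
    rw [hNdef, Int.cast_mul,
      intCast_eval_scaleRoots (y := a * u) (by linear_combination (a : S) * hu)]
    push_cast
    linear_combination (-(b ^ d * u ^ d + 1 : S) * aeval (a * u) p) * hud
  exact hval ▸ (IsSquare.sq _).mul (hN.map (Int.castRingHom S))

end ClearDenominators

section Quad

/-- The polynomial `f_k = X ^ 2 + k X - 1` whose iterates are studied. -/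
noncomputable abbrev quad (k : ℤ) : ℤ[X] := X ^ 2 + C k * X - 1

/-- The self-map `y ↦ f_k(y)` of a commutative ring, in a form on which `decide` can compute. -/
def quadMap {R : Type*} [CommRing R] (k y : R) : R := y ^ 2 + k * y - 1

/-- The orbit of the critical value: `criticalOrbit k n` is `f_k^(n+1)(-k/2)`. -/
def criticalOrbit (k : ℤ) (n : ℕ) : ℚ := (quadMap (k : ℚ))^[n] (-(k ^ 2 + 4) / 4)

theorem criticalOrbit_succ (k : ℤ) (n : ℕ) :
    criticalOrbit k (n + 1) = quadMap (k : ℚ) (criticalOrbit k n) :=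
  Function.iterate_succ_apply' ..

theorem aeval_quad {R : Type*} [CommRing R] (k : ℤ) (y : R) :
    aeval y (quad k) = quadMap (k : R) y := by
  simp [quadMap]

theorem monic_quad (k : ℤ) : (quad k).Monic := by
  unfold quad; monicity!

theorem natDegree_quad (k : ℤ) : (quad k).natDegree = 2 := by
  unfold quad; compute_degree!

theorem map_quad (k : ℤ) : (quad k).map (Int.castRingHom ℚ)
    = (X - C (-(k : ℚ) / 2)) ^ 2 + C (-(k ^ 2 + 4) / 4 : ℚ) := by
  refine Polynomial.funext fun x ↦ ?_
  simp
  ring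

theorem map_polyIter {R : Type*} [CommRing R] (f : ℤ[X]) (φ : ℤ →+* R) (n : ℕ) :
    (polyIter f n).map φ = (f.map φ).comp^[n] X := by
  induction n with
  | zero => simp [polyIter]
  | succ n ih => rw [polyIter, Polynomial.map_comp, ih, Function.iterate_succ_apply']

theorem aeval_polyIter_quad {R : Type*} [CommRing R] (k : ℤ) (y : R) (n : ℕ) :
    aeval y (polyIter (quad k) n) = (quadMap (k : R))^[n] y := by
  induction n with
  | zero => simp [polyIter]
  | succ n ih => rw [polyIter, aeval_comp, ih, aeval_quad, Function.iterate_succ_apply']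

end Quad

section Criteria

theorem irreducible_map_comp_polyIter_quad {k : ℤ} {g : ℤ[X]} (hg : g.Monic)
    (hirr : Irreducible (g.map (Int.castRingHom ℚ))) (heven : Even g.natDegree)
    (hsq : ∀ n, ¬IsSquare (aeval (criticalOrbit k n) g)) (n : ℕ) :
    Irreducible ((g.comp (polyIter (quad k) n)).map (Int.castRingHom ℚ)) := by
  have hmap : quadMap (k : ℚ) = fun x ↦ (x - -(k : ℚ) / 2) ^ 2 + -(k ^ 2 + 4) / 4 := by
    funext x
    unfold quadMap
    ring
  rw [Polynomial.map_comp, map_polyIter, map_quad]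
  refine irreducible_comp_iterate_comp_X _ _ (hg.map _) hirr (by rwa [hg.natDegree_map]) ?_ n
  simpa [criticalOrbit, hmap, eval_map, aeval_def] using hsq

theorem irreducible_map_quad {k : ℤ} (hk : k ≠ 0) :
    Irreducible ((quad k).map (Int.castRingHom ℚ)) := by
  rw [map_quad, ← X_comp (p := _ + _)]
  refine irreducible_comp_X_sub_C_sq_add_C _ _ monic_X irreducible_X fun ⟨r, hr⟩ ↦
    not_isSquare_sq_add_four hk ?_
  rw [← Rat.isSquare_intCast_iff]
  refine ⟨2 * r, ?_⟩
  push_cast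
  simp only [natDegree_X, pow_one, eval_X] at hr
  linear_combination 4 * hr

theorem irreducible_map_polyIter_quad {k : ℤ} (hk : k ≠ 0)
    (hsq : ∀ n, ¬IsSquare (criticalOrbit k (n + 1))) {n : ℕ} (hn : 1 ≤ n) :
    Irreducible ((polyIter (quad k) n).map (Int.castRingHom ℚ)) := by
  obtain ⟨n, rfl⟩ := Nat.exists_eq_add_of_le' hn
  refine irreducible_map_comp_polyIter_quad (monic_quad k) (irreducible_map_quad hk)
    (by simp [natDegree_quad]) (fun n ↦ ?_) n
  rw [aeval_quad, ← criticalOrbit_succ]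
  exact hsq n

theorem not_isSquare_aeval_criticalOrbit {S : Type*} [CommRing S] {k : ℤ} {g : ℤ[X]} {u : S}
    (T : Finset S) (hu : 4 * u = 1) (hstart : -((k : S) ^ 2 + 4) * u ∈ T)
    (hT : ∀ y ∈ T, quadMap (k : S) y ∈ T) (hg : ∀ y ∈ T, ¬IsSquare (aeval y g)) (n : ℕ) :
    ¬IsSquare (aeval (criticalOrbit k n) g) := by
  intro h
  have hmem : (quadMap (k : S))^[n] (-((k : S) ^ 2 + 4) * u) ∈ T :=
    Set.MapsTo.iterate (s := (T : Set S)) hT n hstart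
  refine hg _ hmem ?_
  have hred := isSquare_aeval_of_isSquare_aeval_div (a := -(k ^ 2 + 4)) (b := 4) (u := u)
    (p := g.comp (polyIter (quad k) n)) (by norm_num) (by simpa using hu)
  push_cast [aeval_comp, aeval_polyIter_quad] at hred
  exact hred h

theorem irreducible_map_polyIter_quad_of_finset {S : Type*} [CommRing S] {k : ℤ}
    (hk : k ≠ 0) {u : S} (T : Finset S) (hu : 4 * u = 1) (hstart : -((k : S) ^ 2 + 4) * u ∈ T)
    (hT : ∀ y ∈ T, quadMap (k : S) y ∈ T ∧ ¬IsSquare y) {n : ℕ} (hn : 1 ≤ n) :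
    Irreducible ((polyIter (quad k) n).map (Int.castRingHom ℚ)) := by
  refine irreducible_map_polyIter_quad hk (fun n ↦ ?_) hn
  rw [← aeval_X (R := ℤ) (criticalOrbit k (n + 1))]
  exact not_isSquare_aeval_criticalOrbit T hu hstart (fun y hy ↦ (hT y hy).1)
    (fun y hy ↦ by rw [aeval_X]; exact (hT y hy).2) (n + 1)

end Criteria

section Growth

theorem not_isSquare_criticalOrbit_one {k : ℤ} (hk : k ≤ -1 ∨ 5 ≤ k) :
    ¬IsSquare (criticalOrbit k 1) := by
  intro h
  have hvalue : (((k ^ 2 - 2 * k + 2) ^ 2 - 4 * (2 * k + 1) : ℤ) : ℚ)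
      = 4 ^ 2 * criticalOrbit k 1 := by
    simp only [criticalOrbit, Function.iterate_one, quadMap]
    push_cast
    ring
  have hsq : IsSquare ((k ^ 2 - 2 * k + 2) ^ 2 - 4 * (2 * k + 1)) := by
    rw [← Rat.isSquare_intCast_iff, hvalue]
    exact (IsSquare.sq _).mul h
  have hle := abs_le_abs_add_one_of_isSquare (by lia) hsq
  rw [abs_of_nonneg (by nlinarith)] at hle
  rcases hk with hk | hk
  · rw [abs_of_neg (by lia)] at hle
    nlinarith
  · rw [abs_of_pos (by lia)] at hle
    nlinarith

theorem criticalOrbit_succ_add (k : ℤ) (n : ℕ) : criticalOrbit k (n + 1) + k / 2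
    = (criticalOrbit k n + k / 2) ^ 2 - ((k : ℚ) ^ 2 - 2 * k + 4) / 4 := by
  rw [criticalOrbit_succ, quadMap]
  ring

theorem exists_intCast_eq_four_pow_mul_criticalOrbit (k : ℤ) (n : ℕ) :
    ∃ a : ℤ, (a : ℚ) = 4 ^ 2 ^ n * criticalOrbit k n := by
  induction n with
  | zero => exact ⟨-(k ^ 2 + 4), by simp [criticalOrbit]; ring⟩
  | succ n ih =>
    obtain ⟨a, ha⟩ := ih
    refine ⟨a ^ 2 + k * 4 ^ 2 ^ n * a - (4 ^ 2 ^ n) ^ 2, ?_⟩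
    push_cast
    rw [ha, criticalOrbit_succ, quadMap, pow_succ 2 n, pow_mul]
    ring

theorem criticalOrbit_add_mul_le {k : ℤ} {n : ℕ} (h : IsSquare (criticalOrbit k (n + 1))) :
    (criticalOrbit k n + k / 2) * 4 ^ 2 ^ n ≤ (k ^ 2 + 4) / 16 * (4 ^ 2 ^ n) ^ 2 + 1 := by
  obtain ⟨a, ha⟩ := exists_intCast_eq_four_pow_mul_criticalOrbit k n
  obtain ⟨M, hM⟩ : (4 : ℤ) ∣ 4 ^ 2 ^ n := dvd_pow_self 4 (by positivity)
  have hMq : (4 : ℚ) ^ 2 ^ n = 4 * M := by exact_mod_cast hM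
  have hM0 : M ≠ 0 := by rintro rfl; simp at hM
  rw [hMq] at ha ⊢
  have hvalue : (((a + 2 * k * M) ^ 2 - 4 * ((k ^ 2 + 4) * M ^ 2) : ℤ) : ℚ)
      = (4 * M) ^ 2 * criticalOrbit k (n + 1) := by
    push_cast
    rw [ha, criticalOrbit_succ, quadMap]
    ring
  have hsq : IsSquare ((a + 2 * k * M) ^ 2 - 4 * ((k ^ 2 + 4) * M ^ 2)) := by
    rw [← Rat.isSquare_intCast_iff, hvalue]
    exact (IsSquare.sq _).mul h
  have hle : a + 2 * k * M ≤ (k ^ 2 + 4) * M ^ 2 + 1 :=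
    calc a + 2 * k * M ≤ |a + 2 * k * M| := le_abs_self _
      _ ≤ |(k ^ 2 + 4) * M ^ 2| + 1 := abs_le_abs_add_one_of_isSquare (by positivity) hsq
      _ = (k ^ 2 + 4) * M ^ 2 + 1 := by rw [abs_of_nonneg (by positivity)]
  have hleq : (a + 2 * k * M : ℚ) ≤ (k ^ 2 + 4) * M ^ 2 + 1 := by exact_mod_cast hle
  rw [ha] at hleq
  linear_combination hleq

theorem sixteen_le_four_pow_two_pow_succ (n : ℕ) : (16 : ℚ) ≤ 4 ^ 2 ^ (n + 1) :=
  calc (16 : ℚ) = 4 ^ 2 ^ 1 := by norm_num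
    _ ≤ 4 ^ 2 ^ (n + 1) := by gcongr <;> simp

-- The constant only has to beat the `(k ^ 2 + 4) / 16` of `criticalOrbit_add_mul_le`.
theorem le_criticalOrbit_succ_add {k : ℤ} (hk : k ≤ -4 ∨ 6 ≤ k) (n : ℕ) :
    ((k : ℚ) ^ 2 + 5) / 16 * 4 ^ 2 ^ (n + 1) ≤ criticalOrbit k (n + 1) + k / 2 := by
  have hk_sq : 16 ≤ (k : ℚ) ^ 2 := by
    have : 16 ≤ k ^ 2 := by rcases hk with hk | hk <;> nlinarith
    exact_mod_cast this
  induction n with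
  | zero =>
    have hw : 24 ≤ (k : ℚ) ^ 2 - 2 * k := by
      have : 24 ≤ k ^ 2 - 2 * k := by rcases hk with hk | hk <;> nlinarith
      exact_mod_cast this
    have hw' : 0 ≤ 3 * (k : ℚ) ^ 2 - 14 * k - 20 := by
      have : 0 ≤ 3 * k ^ 2 - 14 * k - 20 := by rcases hk with hk | hk <;> nlinarith
      exact_mod_cast this
    rw [criticalOrbit_succ_add, criticalOrbit, Function.iterate_zero_apply]
    nlinarith [mul_nonneg (sub_nonneg.2 hw) (by linarith : 0 ≤ (k : ℚ) ^ 2 - 2 * k)]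
  | succ n ih =>
    set E : ℚ := 4 ^ 2 ^ (n + 1) with hE
    have hE_sq : 256 ≤ E ^ 2 := by nlinarith [sixteen_le_four_pow_two_pow_succ n]
    have hsq : ((k ^ 2 + 5) / 16 * E) ^ 2 ≤ (criticalOrbit k (n + 1) + k / 2) ^ 2 := by gcongr
    have hslack : ((k : ℚ) ^ 2 - 2 * k + 4) / 4 ≤ (k ^ 2 + 5) / 16 * ((k ^ 2 - 11) / 16) * E ^ 2 :=
      calc ((k : ℚ) ^ 2 - 2 * k + 4) / 4
        _ ≤ (k ^ 2 + 5) / 16 * ((k ^ 2 - 11) / 16) * 256 := by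
          nlinarith [sq_nonneg ((k : ℚ) + 1),
            mul_nonneg (sq_nonneg (k : ℚ)) (sub_nonneg.2 hk_sq)]
        _ ≤ (k ^ 2 + 5) / 16 * ((k ^ 2 - 11) / 16) * E ^ 2 := by
          have : 0 ≤ (k : ℚ) ^ 2 - 11 := by linarith
          gcongr
    rw [criticalOrbit_succ_add, pow_succ 2 (n + 1), pow_mul, ← hE]
    linear_combination hsq + hslack

theorem not_isSquare_criticalOrbit_succ {k : ℤ} (hk : k ≤ -4 ∨ 6 ≤ k) (n : ℕ) :
    ¬IsSquare (criticalOrbit k (n + 1)) := by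
  intro h
  cases n with
  | zero => exact not_isSquare_criticalOrbit_one (by lia) h
  | succ n =>
    nlinarith [criticalOrbit_add_mul_le h, le_criticalOrbit_succ_add hk n,
      sixteen_le_four_pow_two_pow_succ n]

end Growth

section SmallParameters

set_option maxRecDepth 1000 in
theorem irreducible_map_polyIter_quad_of_mem {k : ℤ}
    (hk : k ∈ ({-3, -2, 1, 2, 3, 5} : Finset ℤ)) {n : ℕ} (hn : 1 ≤ n) :
    Irreducible ((polyIter (quad k) n).map (Int.castRingHom ℚ)) := by
  simp only [Finset.mem_insert, Finset.mem_singleton] at hk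
  rcases hk with rfl | rfl | rfl | rfl | rfl | rfl
  · exact irreducible_map_polyIter_quad_of_finset (S := ZMod 9) (u := 7) (by decide) {3, 8}
      (by decide) (by decide) (by decide) hn
  · exact irreducible_map_polyIter_quad_of_finset (S := ZMod 13) (u := 10) (by decide) {7, 8, 11}
      (by decide) (by decide) (by decide) hn
  · -- The orbit meets the squares modulo `7` and modulo `11`, but never both at once.
    exact irreducible_map_polyIter_quad_of_finset (S := ZMod 7 × ZMod 11) (u := (2, 3))
      (by decide) {(4, 7), (5, 0), (1, 10)}
      (by decide) (by decide) (by decide) hn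
  · exact irreducible_map_polyIter_quad_of_finset (S := ZMod 7) (u := 2) (by decide) {5, 6}
      (by decide) (by decide) (by decide) hn
  · exact irreducible_map_polyIter_quad_of_finset (S := ZMod 9) (u := 7) (by decide) {6, 8}
      (by decide) (by decide) (by decide) hn
  · exact irreducible_map_polyIter_quad_of_finset (S := ZMod 21) (u := 16) (by decide)
      {2, 13, 14, 19}
      (by decide) (by decide) (by decide) hn

end SmallParameters

section Four

theorem irreducible_map_quad_four_comp_quad_four :
    Irreducible (((quad 4).comp (quad 4)).map (Int.castRingHom ℚ)) := by
  have hcomp : (quad 4).comp (quad 4) = (X ^ 2 + 4 * X + 1) ^ 2 - C 5 := by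
    refine Polynomial.funext fun x ↦ ?_
    simp
    ring
  have hq : (X ^ 2 + 4 * X + 1 : ℤ[X]).Monic := by monicity!
  have hmonic := (monic_quad 4).comp (monic_quad 4) (by simp [natDegree_quad])
  refine (hmonic.irreducible_iff_irreducible_map_fraction_map (K := ℚ)).1 ?_
  rw [hcomp]
  have hroot : ∀ x : ZMod 5, x ^ 2 + 4 * x + 1 ≠ 0 := by decide
  have : Fact (Nat.Prime 5) := ⟨Nat.prime_five⟩
  have hker : RingHom.ker (algebraMap ℤ (ZMod 5)) = Ideal.span {5} := ZMod.ker_intCastRingHom 5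
  refine irreducible_pow_sub_C (K := ZMod 5) ?_ hq rfl ?_ two_ne_zero
  · have hmap : (X ^ 2 + 4 * X + 1 : ℤ[X]).map (algebraMap ℤ (ZMod 5)) = X ^ 2 + 4 * X + 1 := by
      simp
    have hdeg : (X ^ 2 + 4 * X + 1 : (ZMod 5)[X]).natDegree = 2 := by compute_degree!
    rw [hmap]
    refine irreducible_of_degree_le_three_of_not_isRoot (by simp [hdeg]) fun x ↦ ?_
    simpa using hroot x
  · rw [hker, Ideal.span_singleton_pow, Ideal.mem_span_singleton]
    norm_num

theorem irreducible_map_polyIter_quad_four {n : ℕ} (hn : 1 ≤ n) :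
    Irreducible ((polyIter (quad 4) n).map (Int.castRingHom ℚ)) := by
  obtain rfl | ⟨m, rfl⟩ : n = 1 ∨ ∃ m, n = m + 2 := by
    obtain rfl | hn := hn.eq_or_lt
    exacts [.inl rfl, .inr (Nat.exists_eq_add_of_le' hn)]
  · simpa [polyIter] using irreducible_map_quad four_ne_zero
  · have hiter : polyIter (quad 4) (m + 2) = ((quad 4).comp (quad 4)).comp (polyIter (quad 4) m) :=
      (comp_assoc ..).symm
    rw [hiter]
    refine irreducible_map_comp_polyIter_quad
      ((monic_quad 4).comp (monic_quad 4) (by simp [natDegree_quad]))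
      irreducible_map_quad_four_comp_quad_four
      (by rw [natDegree_comp, natDegree_quad]; decide) ?_ m
    refine not_isSquare_aeval_criticalOrbit (S := ZMod 7) (u := 2) {2, 3, 4, 6}
      (by decide) (by decide) (by decide) ?_
    simp only [aeval_comp, aeval_quad]
    decide

end Four

section NegOne

/-- The first factor of the third iterate of `f_{-1}`. -/
noncomputable abbrev leftFactor : ℤ[X] := X ^ 4 - 3 * X ^ 3 + 4 * X - 1

/-- The second factor of the third iterate of `f_{-1}`. -/
noncomputable abbrev rightFactor : ℤ[X] := X ^ 4 - X ^ 3 - 3 * X ^ 2 + X + 1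

theorem monic_leftFactor : leftFactor.Monic := by
  unfold leftFactor; monicity!

theorem monic_rightFactor : rightFactor.Monic := by
  unfold rightFactor; monicity!

theorem natDegree_leftFactor : leftFactor.natDegree = 4 := by
  unfold leftFactor; compute_degree!

theorem natDegree_rightFactor : rightFactor.natDegree = 4 := by
  unfold rightFactor; compute_degree!

theorem polyIter_quad_neg_one_three :
    polyIter (quad (-1)) 3 = leftFactor * rightFactor := by
  refine Polynomial.funext fun x ↦ ?_
  simp [polyIter]
  ring

theorem irreducible_map_leftFactor : Irreducible (leftFactor.map (Int.castRingHom ℚ)) := by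
  refine irreducible_map_rat_of_irreducible_map monic_leftFactor (Int.castRingHom (ZMod 2)) ?_
  have hmod : leftFactor.map (Int.castRingHom (ZMod 2))
      = X ^ 4 + C 1 * X ^ 3 + C 0 * X ^ 2 + C 0 * X + C 1 := by
    simp only [Polynomial.map_add, Polynomial.map_sub, Polynomial.map_mul, Polynomial.map_pow,
      Polynomial.map_ofNat, Polynomial.map_one, map_X, map_one, map_zero, one_mul, zero_mul,
      add_zero]
    reduce_mod_char
  rw [hmod]
  exact irreducible_quartic (by decide) (by decide)

theorem irreducible_map_rightFactor : Irreducible (rightFactor.map (Int.castRingHom ℚ)) := by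
  refine irreducible_map_rat_of_irreducible_map monic_rightFactor (Int.castRingHom (ZMod 2)) ?_
  have hmod : rightFactor.map (Int.castRingHom (ZMod 2))
      = X ^ 4 + C 1 * X ^ 3 + C 1 * X ^ 2 + C 1 * X + C 1 := by
    simp only [Polynomial.map_add, Polynomial.map_sub, Polynomial.map_mul, Polynomial.map_pow,
      Polynomial.map_ofNat, Polynomial.map_one, map_X, map_one, one_mul]
    reduce_mod_char
  rw [hmod]
  exact irreducible_quartic (by decide) (by decide)

set_option maxRecDepth 1000 in
theorem irreducible_map_leftFactor_comp_polyIter (n : ℕ) :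
    Irreducible ((leftFactor.comp (polyIter (quad (-1)) n)).map (Int.castRingHom ℚ)) := by
  refine irreducible_map_comp_polyIter_quad monic_leftFactor irreducible_map_leftFactor
    (natDegree_leftFactor ▸ by decide) ?_ n
  -- On the orbit the values are alternately squares and nonsquares modulo `3`; where they are
  -- squares, they are nonsquares modulo `23`.
  refine not_isSquare_aeval_criticalOrbit (S := ZMod 3 × ZMod 23) (u := (1, 6))
    {(1, 16), (2, 9), (1, 2), (2, 1), (1, 22)} (by decide) (by decide) (by decide) ?_
  simp only [map_add, map_sub, map_mul, map_pow, aeval_X, map_ofNat, map_one]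
  decide

theorem irreducible_map_rightFactor_comp_polyIter (n : ℕ) :
    Irreducible ((rightFactor.comp (polyIter (quad (-1)) n)).map (Int.castRingHom ℚ)) := by
  refine irreducible_map_comp_polyIter_quad monic_rightFactor irreducible_map_rightFactor
    (natDegree_rightFactor ▸ by decide) ?_ n
  refine not_isSquare_aeval_criticalOrbit (S := ZMod 3) (u := 1)
    {1, 2} (by decide) (by decide) (by decide) ?_
  simp only [map_add, map_sub, map_mul, map_pow, aeval_X, map_ofNat, map_one]
  decide

end NegOne

theorem irreducible_map_polyIter_quad_of_ne {k : ℤ} (hk0 : k ≠ 0) (hk1 : k ≠ -1) {n : ℕ}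
    (hn : 1 ≤ n) : Irreducible ((polyIter (quad k) n).map (Int.castRingHom ℚ)) := by
  by_cases hlarge : k ≤ -4 ∨ 6 ≤ k
  · exact irreducible_map_polyIter_quad hk0 (not_isSquare_criticalOrbit_succ hlarge) hn
  obtain rfl | hsmall : k = 4 ∨ k ∈ ({-3, -2, 1, 2, 3, 5} : Finset ℤ) := by
    simp only [Finset.mem_insert, Finset.mem_singleton]
    lia
  · exact irreducible_map_polyIter_quad_four hn
  · exact irreducible_map_polyIter_quad_of_mem hsmall hn

theorem stability_X_sq_add_kX_sub_one (k : ℤ) (hk0 : k ≠ 0) :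
    (k ≠ -1 →
      ∀ n : ℕ, 1 ≤ n →
        Irreducible ((polyIter (X ^ 2 + C k * X - 1) n).map (Int.castRingHom ℚ))) ∧
    (k = -1 →
      polyIter (X ^ 2 + C k * X - 1) 3 =
        (X ^ 4 - 3 * X ^ 3 + 4 * X - 1) * (X ^ 4 - X ^ 3 - 3 * X ^ 2 + X + 1) ∧
      (∀ n : ℕ, Irreducible
        (((X ^ 4 - 3 * X ^ 3 + 4 * X - 1 : Polynomial ℤ).comp
          (polyIter (X ^ 2 + C k * X - 1) n)).map (Int.castRingHom ℚ))) ∧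
      (∀ n : ℕ, Irreducible
        (((X ^ 4 - X ^ 3 - 3 * X ^ 2 + X + 1 : Polynomial ℤ).comp
          (polyIter (X ^ 2 + C k * X - 1) n)).map (Int.castRingHom ℚ)))) := by
  refine ⟨fun hk1 _ hn ↦ irreducible_map_polyIter_quad_of_ne hk0 hk1 hn, ?_⟩
  rintro rfl
  exact ⟨polyIter_quad_neg_one_three, irreducible_map_leftFactor_comp_polyIter,
    irreducible_map_rightFactor_comp_polyIter⟩
end

section
/- Let f ∈ ℤ[x] be such that every iterate f^n (n ≥ 1) is separable over ℚ, 0 is a critical point of f (i.e. f′(0) = 0), the set {f^n(0) : n ≥ 1} is infinite, and (f^n(0))_{n≥1} is a rigid divisibility sequence (for every prime p, v_p(f^n(0)) > 0 implies v_p(f^{mn}(0)) = v_p(f^n(0)) for all m ≥ 1). If g ∈ ℤ[x] divides f in ℤ[x], then the sequence b_n = g(f^{n−1}(0)) (n ≥ 1) consists of nonzero integers and is a rigid divisibility sequence: for every prime p and all n ≥ 1, if v_p(b_n) > 0 then v_p(b_{mn}) = v_p(b_n) for all m ≥ 1. -/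
open Polynomial

/-!
Write `a n = f^n(0)` and `f = g * h`, so that `v (a n) = v (g (a (n - 1))) + v (h (a (n - 1)))`.
Since `a (m * n - 1)` and `a (n - 1)` are the images of `a ((m - 1) * n)` and `0` under `f^(n - 1)`,
they are congruent modulo `p ^ v (a n)`. Hence neither summand can drop in passing from `n` to
`m * n`; as their finite sum does not change, neither summand does.
-/

/-- A rigid divisibility sequence of nonzero elements: for every prime `p`, the multiplicity of `p`
in a term `b n` divisible by `p` recurs in every `b (m * n)`. This is the property that passes from
the orbit of `0` under `f` to the values of a factor of `f` along that orbit. The sequence is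
indexed from `1`, and nothing is required of `b 0`. -/
structure IsRigidDivisibilitySequence {R : Type*} [CommMonoidWithZero R] (b : ℕ → R) : Prop where
  ne_zero : ∀ n, 1 ≤ n → b n ≠ 0
  emultiplicity_eq : ∀ p, Prime p → ∀ n, 1 ≤ n → ∀ m, 1 ≤ m →
    p ∣ b n → emultiplicity p (b (m * n)) = emultiplicity p (b n)

theorem emultiplicity_eq_left_of_mul_eq {M : Type*} [CommMonoidWithZero M] [IsCancelMulZero M]
    {p a b c d : M} (hp : Prime p) (hd : FiniteMultiplicity p d)
    (hca : emultiplicity p c ≤ emultiplicity p a) (hdb : emultiplicity p d ≤ emultiplicity p b)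
    (h : emultiplicity p (a * b) = emultiplicity p (c * d)) :
    emultiplicity p a = emultiplicity p c := by
  refine le_antisymm ?_ hca
  rw [← ENat.add_le_add_iff_right (finiteMultiplicity_iff_emultiplicity_ne_top.mp hd)]
  calc emultiplicity p a + emultiplicity p d
      ≤ emultiplicity p a + emultiplicity p b := by gcongr
    _ = emultiplicity p c + emultiplicity p d := by
      rw [← emultiplicity_mul hp, h, emultiplicity_mul hp]

section EvalIterate

variable {R : Type*} [CommRing R]

theorem emultiplicity_eval_le_of_le_sub {p x y : R} (q : R[X])
    (h : emultiplicity p (q.eval y) ≤ emultiplicity p (x - y)) :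
    emultiplicity p (q.eval y) ≤ emultiplicity p (q.eval x) := by
  have hsub : emultiplicity p (q.eval y) ≤ emultiplicity p (q.eval x - q.eval y) :=
    h.trans (emultiplicity_le_emultiplicity_of_dvd_right (sub_dvd_eval_sub x y q))
  calc emultiplicity p (q.eval y)
      ≤ emultiplicity p (q.eval x - q.eval y + q.eval y) :=
        (le_min hsub le_rfl).trans min_le_emultiplicity_add
    _ = emultiplicity p (q.eval x) := by rw [sub_add_cancel]

theorem sub_dvd_iterate_eval_sub (f : R[X]) (n : ℕ) (x y : R) :
    x - y ∣ (fun z => f.eval z)^[n] x - (fun z => f.eval z)^[n] y := by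
  simpa only [iterate_comp_eval, eval_X] using sub_dvd_eval_sub x y (f.comp^[n] X)

theorem iterate_eval_zero_dvd_sub (f : R[X]) (j k : ℕ) :
    (fun z => f.eval z)^[k] 0 ∣ (fun z => f.eval z)^[j + k] 0 - (fun z => f.eval z)^[j] 0 := by
  simpa only [Function.iterate_add_apply, sub_zero] using sub_dvd_iterate_eval_sub f j _ 0

theorem iterate_eval_mul_succ (g h : R[X]) (j : ℕ) (x : R) :
    (fun z => (g * h).eval z)^[j + 1] x =
      g.eval ((fun z => (g * h).eval z)^[j] x) * h.eval ((fun z => (g * h).eval z)^[j] x) := by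
  rw [Function.iterate_succ_apply', eval_mul]

theorem emultiplicity_factor_eval_iterate_eq [IsDomain R] {f g : R[X]} (hdvd : g ∣ f) {p : R}
    (hp : Prime p) {j : ℕ} (hfin : FiniteMultiplicity p ((fun z => f.eval z)^[j + 1] 0))
    (hrigid : ∀ m, 1 ≤ m → emultiplicity p ((fun z => f.eval z)^[m * (j + 1)] 0) =
      emultiplicity p ((fun z => f.eval z)^[j + 1] 0)) (k : ℕ) :
    emultiplicity p (g.eval ((fun z => f.eval z)^[j + k * (j + 1)] 0)) =
      emultiplicity p (g.eval ((fun z => f.eval z)^[j] 0)) := by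
  obtain ⟨h, rfl⟩ := hdvd
  set F : R → R := fun z => (g * h).eval z
  have factor (i : ℕ) : F^[i + 1] 0 = g.eval (F^[i] 0) * h.eval (F^[i] 0) :=
    iterate_eval_mul_succ g h i 0
  have le_multiple : emultiplicity p (F^[j + 1] 0) ≤ emultiplicity p (F^[k * (j + 1)] 0) := by
    rcases Nat.eq_zero_or_pos k with rfl | hk
    · simp
    · exact (hrigid k hk).ge
  have le_sub : emultiplicity p (F^[j + 1] 0) ≤
      emultiplicity p (F^[j + k * (j + 1)] 0 - F^[j] 0) :=
    le_multiple.trans (emultiplicity_le_emultiplicity_of_dvd_right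
      (iterate_eval_zero_dvd_sub (g * h) j (k * (j + 1))))
  have le_of_dvd (q : R[X]) (hq : q.eval (F^[j] 0) ∣ F^[j + 1] 0) :
      emultiplicity p (q.eval (F^[j] 0)) ≤ emultiplicity p (q.eval (F^[j + k * (j + 1)] 0)) :=
    emultiplicity_eval_le_of_le_sub q
      ((emultiplicity_le_emultiplicity_of_dvd_right hq).trans le_sub)
  rw [factor] at hfin
  refine emultiplicity_eq_left_of_mul_eq hp hfin.mul_right
    (le_of_dvd g (factor j ▸ dvd_mul_right ..)) (le_of_dvd h (factor j ▸ dvd_mul_left ..)) ?_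
  have index : j + k * (j + 1) + 1 = (k + 1) * (j + 1) := by ring
  rw [← factor, ← factor, index]
  exact hrigid (k + 1) (Nat.le_add_left 1 k)

theorem rigid_divisibility_of_factor_general [IsDomain R] [WfDvdMonoid R] {f g : R[X]}
    (hf : IsRigidDivisibilitySequence fun n => (fun z => f.eval z)^[n] 0) (hdvd : g ∣ f)
    {b : ℕ → R} (hb : ∀ n, 1 ≤ n → b n = g.eval ((fun z => f.eval z)^[n - 1] 0)) :
    IsRigidDivisibilitySequence b := by
  have hb_dvd : ∀ n, 1 ≤ n → b n ∣ (fun z => f.eval z)^[n] 0 := fun n hn => by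
    obtain ⟨j, rfl⟩ := Nat.exists_eq_add_of_le' hn
    rw [hb _ hn, Function.iterate_succ_apply']
    exact eval_dvd hdvd
  refine ⟨fun n hn => ne_zero_of_dvd_ne_zero (hf.ne_zero n hn) (hb_dvd n hn), ?_⟩
  intro p hp n hn m hm hpb
  have hpf : p ∣ (fun z => f.eval z)^[n] 0 := hpb.trans (hb_dvd n hn)
  obtain ⟨j, rfl⟩ := Nat.exists_eq_add_of_le' hn
  obtain ⟨k, rfl⟩ := Nat.exists_eq_add_of_le' hm
  have index : (k + 1) * (j + 1) - 1 = j + k * (j + 1) := by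
    rw [add_one_mul, ← add_assoc, Nat.add_sub_cancel, add_comm]
  rw [hb _ hn, hb _ (Nat.mul_pos hm hn), index]
  exact emultiplicity_factor_eval_iterate_eq hdvd hp
    (FiniteMultiplicity.of_prime_left hp (hf.ne_zero _ hn))
    (fun m hm => hf.emultiplicity_eq p hp _ hn m hm hpf) k

end EvalIterate

theorem iterate_ne_self_of_infinite {α : Type*} {F : α → α} {x : α}
    (hinf : {y | ∃ n, 1 ≤ n ∧ F^[n] x = y}.Infinite) {n : ℕ} (hn : 1 ≤ n) : F^[n] x ≠ x := by
  intro hper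
  refine hinf (((Set.finite_Iio n).image fun i => F^[i] x).subset ?_)
  rintro _ ⟨m, -, rfl⟩
  exact ⟨m % n, Nat.mod_lt m hn, Function.IsPeriodicPt.iterate_mod_apply hper m⟩

theorem natCast_padicValInt_eq_emultiplicity {p : ℕ} (hp : p ≠ 1) {z : ℤ} (hz : z ≠ 0) :
    (padicValInt p z : ℕ∞) = emultiplicity (p : ℤ) z := by
  rw [padicValInt, padicValNat_eq_emultiplicity_of_ne_one hp (Int.natAbs_ne_zero.mpr hz),
    Int.emultiplicity_natAbs]

theorem padicValInt_pos_iff_dvd {p : ℕ} (hp : p ≠ 1) {z : ℤ} (hz : z ≠ 0) :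
    0 < padicValInt p z ↔ (p : ℤ) ∣ z := by
  simp [Nat.pos_iff_ne_zero, padicValInt.eq_zero_iff, hp, hz]

theorem isRigidDivisibilitySequence_int_iff {b : ℕ → ℤ} :
    IsRigidDivisibilitySequence b ↔ (∀ n, 1 ≤ n → b n ≠ 0) ∧
      ∀ p : ℕ, p.Prime → ∀ n, 1 ≤ n → ∀ m, 1 ≤ m →
        0 < padicValInt p (b n) → padicValInt p (b (m * n)) = padicValInt p (b n) := by
  have val_eq_iff (hne : ∀ n, 1 ≤ n → b n ≠ 0) {p n m : ℕ} (hp : p.Prime) (hn : 1 ≤ n)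
      (hm : 1 ≤ m) : padicValInt p (b (m * n)) = padicValInt p (b n) ↔
        emultiplicity (p : ℤ) (b (m * n)) = emultiplicity (p : ℤ) (b n) := by
    rw [← natCast_padicValInt_eq_emultiplicity hp.ne_one (hne _ (Nat.mul_pos hm hn)),
      ← natCast_padicValInt_eq_emultiplicity hp.ne_one (hne n hn), Nat.cast_inj]
  constructor
  · rintro ⟨hne, hrigid⟩
    refine ⟨hne, fun p hp n hn m hm hpos => (val_eq_iff hne hp hn hm).mpr ?_⟩
    exact hrigid p (Nat.prime_iff_prime_int.mp hp) n hn m hm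
      ((padicValInt_pos_iff_dvd hp.ne_one (hne n hn)).mp hpos)
  · rintro ⟨hne, hrigid⟩
    refine ⟨hne, fun p hp n hn m hm hdvd => ?_⟩
    have hp' : p.natAbs.Prime := Int.prime_iff_natAbs_prime.mp hp
    have hassoc : Associated p p.natAbs := Int.associated_natAbs p
    rw [← emultiplicity_eq_of_associated_left hassoc, ← emultiplicity_eq_of_associated_left hassoc]
    exact (val_eq_iff hne hp' hn hm).mp (hrigid _ hp' n hn m hm
      ((padicValInt_pos_iff_dvd hp'.ne_one (hne n hn)).mpr (hassoc.dvd_iff_dvd_left.mp hdvd)))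

theorem rigid_divisibility_of_factor
    (f : Polynomial ℤ)
    (hsep : ∀ n : ℕ, 1 ≤ n → ((polyIter f n).map (Int.castRingHom ℚ)).Separable)
    (hcrit : Polynomial.eval 0 (Polynomial.derivative f) = 0)
    (hinf : {x : ℤ | ∃ n : ℕ, 1 ≤ n ∧ (fun y => Polynomial.eval y f)^[n] 0 = x}.Infinite)
    (hrigid : ∀ p : ℕ, p.Prime → ∀ n : ℕ, 1 ≤ n → ∀ m : ℕ, 1 ≤ m →
      0 < padicValInt p ((fun y => Polynomial.eval y f)^[n] 0) →
      padicValInt p ((fun y => Polynomial.eval y f)^[m * n] 0) =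
        padicValInt p ((fun y => Polynomial.eval y f)^[n] 0))
    (g : Polynomial ℤ) (hdvd : g ∣ f)
    (b : ℕ → ℤ)
    (hb : ∀ n : ℕ, 1 ≤ n → b n = Polynomial.eval ((fun y => Polynomial.eval y f)^[n - 1] 0) g) :
    (∀ n : ℕ, 1 ≤ n → b n ≠ 0) ∧
    (∀ p : ℕ, p.Prime → ∀ n : ℕ, 1 ≤ n → ∀ m : ℕ, 1 ≤ m →
      0 < padicValInt p (b n) → padicValInt p (b (m * n)) = padicValInt p (b n)) :=
  isRigidDivisibilitySequence_int_iff.mp <| rigid_divisibility_of_factor_general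
    (isRigidDivisibilitySequence_int_iff.mpr ⟨fun _ => iterate_ne_self_of_infinite hinf, hrigid⟩)
    hdvd hb
end
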